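/- Fix integers q ≥ 3 and d ≥ 2, a real β ≥ 1, and a symmetric interaction matrix A ∈ ℝ_{≥0}^{q×q} satisfying: (a) A ≥ 1_q 1_q^T entrywise with strict inequality in at least one entry; (b) |𝓜(d,A)| ≥ 2 and there exist c ∈ [q] and a₁, a₂ ∈ 𝓜(d,A) with A_{c,a₁} ≠ A_{c,a₂}. Let B = B(β,A). Then for every strictly monotone function φ : [0,1] → ℝ there does NOT exist a probability distribution ξ on d-tuples (λ^{(1)},…,λ^{(d)}) of external fields λ^{(i)} ∈ ℝ_{≥0}^{d×(q+1)} such that for every probability distribution μ on ([q] ∪ {c*})^d one has the entrywise identity φ(F_{B,d}(μ)) = E_{(λ^{(1)},…,λ^{(d)})∼ξ}[ φ( F_{B,d}( ⊗_{i=1}^d (λ^{(i)} ⋆ μ)_i ) ) ]. -/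

import Mathlib

open scoped BigOperators Classical
open MeasureTheory

/-- A probability distribution on a finite type, represented as a nonnegative
function summing to one. -/
def IsProbDist {ι : Type*} [Fintype ι] (μ : ι → ℝ) : Prop :=
  (∀ x, 0 ≤ μ x) ∧ ∑ x, μ x = 1

/-- The unnormalized belief propagation functional `G_c(μ) = E_{τ∼μ}[∏ i, A c (τ i)]`. -/
noncomputable def Gfun {q d : ℕ} (A : Matrix (Fin q) (Fin q) ℝ)
    (μ : (Fin d → Fin q) → ℝ) (c : Fin q) : ℝ :=
  ∑ σ : Fin d → Fin q, μ σ * ∏ i, A c (σ i)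

/-- The belief propagation functional `F_{A,d,c}(μ) = G_c(μ) / ∑ b, G_b(μ)`. -/
noncomputable def Ffun {q d : ℕ} (A : Matrix (Fin q) (Fin q) ℝ)
    (μ : (Fin d → Fin q) → ℝ) (c : Fin q) : ℝ :=
  Gfun A μ c / ∑ b, Gfun A μ b

/-- The product measure on `[k]^d` with marginals `ν i`. -/
noncomputable def prodMeasure {d k : ℕ} (ν : Fin d → Fin k → ℝ) :
    (Fin d → Fin k) → ℝ :=
  fun σ => ∏ i, ν i (σ i)

/-- The point mass `δ_b` at a spin `b`. -/
noncomputable def pointMass {k : ℕ} (b : Fin k) : Fin k → ℝ :=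
  fun c => if c = b then 1 else 0

/-- The marginal of a distribution `μ` on `[k]^d` at coordinate `i`. -/
noncomputable def marg {d k : ℕ} (μ : (Fin d → Fin k) → ℝ) (i : Fin d) : Fin k → ℝ :=
  fun b => ∑ σ : Fin d → Fin k, if σ i = b then μ σ else 0

/-- The tilt `λ ⋆ μ` of a distribution `μ` on `[k]^d` by an external field `λ`. -/
noncomputable def tilt {d k : ℕ} (lam : Fin d → Fin k → ℝ)
    (μ : (Fin d → Fin k) → ℝ) : (Fin d → Fin k) → ℝ :=
  fun σ => (μ σ * ∏ i, lam i (σ i)) / ∑ σ' : Fin d → Fin k, μ σ' * ∏ i, lam i (σ' i)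

/-- The `(q+1) × (q+1)` interaction matrix `B(β,A) = [[β, 1ᵀ],[1, A]]`; the index `0`
plays the role of the special spin `c*`. -/
noncomputable def Bmat {q : ℕ} (β : ℝ) (A : Matrix (Fin q) (Fin q) ℝ) :
    Matrix (Fin (q+1)) (Fin (q+1)) ℝ :=
  Matrix.of fun i j =>
    if hi : i = 0 then (if j = 0 then β else 1)
    else if hj : j = 0 then 1 else A (i.pred hi) (j.pred hj)

/-- `𝓜(d,A) = argmax_{b} ∑ c, A c b ^ d`. -/
def Mset {q : ℕ} (d : ℕ) (A : Matrix (Fin q) (Fin q) ℝ) : Set (Fin q) :=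
  {b | ∀ b', ∑ c, A c b' ^ d ≤ ∑ c, A c b ^ d}

/-- `max_{b ∈ [q]} ∑ c, A c b ^ d` (as a supremum over the finite nonempty type `Fin q`). -/
noncomputable def maxCol {q : ℕ} (d : ℕ) (A : Matrix (Fin q) (Fin q) ℝ) : ℝ :=
  ⨆ b, ∑ c, A c b ^ d

/-- mixture of two constant configurations -/
noncomputable def mixd {d k : ℕ} (a b : Fin k) (t : ℝ) : (Fin d → Fin k) → ℝ :=
  fun σ => t * (if σ = (fun _ => a) then 1 else 0) + (1 - t) * (if σ = (fun _ => b) then 1 else 0)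

lemma sum_mixd {d k : ℕ} (a b : Fin k) (t : ℝ) (g : (Fin d → Fin k) → ℝ) :
    ∑ σ, mixd a b t σ * g σ = t * g (fun _ => a) + (1 - t) * g (fun _ => b) := by
  simp [mixd, add_mul, Finset.sum_add_distrib, mul_assoc, ← Finset.mul_sum]

lemma mixd_prob {d k : ℕ} (a b : Fin k) (t : ℝ) (h0 : 0 ≤ t) (h1 : t ≤ 1) :
    IsProbDist (mixd (d := d) a b t) := by
  constructor
  · intro σ
    have : 0 ≤ 1 - t := by linarith
    unfold mixd
    positivity
  · have := sum_mixd (d := d) a b t (fun _ => 1)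
    simpa using this

lemma Gfun_mixd {d k : ℕ} (B : Matrix (Fin k) (Fin k) ℝ) (a b : Fin k) (t : ℝ) (c : Fin k) :
    Gfun B (mixd (d := d) a b t) c = t * B c a ^ d + (1 - t) * B c b ^ d := by
  unfold Gfun
  rw [sum_mixd]
  simp

lemma Gfun_prod {d k : ℕ} (B : Matrix (Fin k) (Fin k) ℝ) (ν : Fin d → Fin k → ℝ) (c : Fin k) :
    Gfun B (prodMeasure ν) c = ∏ i, ∑ b, ν i b * B c b := by
  rw [Finset.prod_univ_sum]
  simp [Gfun, prodMeasure, Finset.prod_mul_distrib]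

lemma marg_sum {d k : ℕ} (μ : (Fin d → Fin k) → ℝ) (i : Fin d) (g : Fin k → ℝ) :
    ∑ b, marg μ i b * g b = ∑ σ, μ σ * g (σ i) := by
  unfold marg
  simp_rw [Finset.sum_mul]
  rw [Finset.sum_comm]
  refine Finset.sum_congr rfl fun σ _ => ?_
  simp [ite_mul]

lemma marg_tilt_mixd {d k : ℕ} (lam : Fin d → Fin k → ℝ) (a b : Fin k) (t : ℝ) (i : Fin d)
    (g : Fin k → ℝ) :
    ∑ x, marg (tilt lam (mixd a b t)) i x * g x =
      (t * (∏ j, lam j a) * g a + (1 - t) * (∏ j, lam j b) * g b) /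
        (t * (∏ j, lam j a) + (1 - t) * (∏ j, lam j b)) := by
  rw [marg_sum]
  unfold tilt
  rw [sum_mixd]
  have : ∀ σ : Fin d → Fin k, (mixd a b t σ * ∏ i, lam i (σ i)) /
      (t * (∏ j, lam j a) + (1 - t) * (∏ j, lam j b)) * g (σ i) = mixd a b t σ *
      ((∏ i, lam i (σ i)) * g (σ i) /
      (t * (∏ j, lam j a) + (1 - t) * (∏ j, lam j b))) := by intro σ; ring
  simp_rw [this]
  rw [sum_mixd]
  ring

lemma amgm {d : ℕ} (hd : 2 ≤ d) (x : Fin d → ℝ) (hx : ∀ i, 0 ≤ x i) :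
    ∏ i, x i ≤ ∑ i, (1 / (d:ℝ)) * x i ^ d := by
  have hd0 : (d:ℝ) ≠ 0 := by positivity
  have := Real.geom_mean_le_arith_mean_weighted (Finset.univ) (fun _ : Fin d => 1 / (d:ℝ))
    (fun i => x i ^ d) (fun _ _ => by positivity) (by simp [hd0]) (fun i _ => pow_nonneg (hx i) d)
  refine le_trans (le_of_eq ?_) this
  refine Finset.prod_congr rfl fun i _ => ?_
  rw [one_div, Real.pow_rpow_inv_natCast (hx i) (by omega)]

lemma pow_mix {d : ℕ} (hd : 2 ≤ d) (u v p : ℝ) (hu : 0 ≤ u) (hv : 0 ≤ v) (hp : 0 < p) (hp1 : p < 1) :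
    (p * u + (1 - p) * v) ^ d ≤ p * u ^ d + (1 - p) * v ^ d ∧
    (u ≠ v → (p * u + (1 - p) * v) ^ d < p * u ^ d + (1 - p) * v ^ d) := by
  have hs := strictConvexOn_pow (n := d) hd
  constructor
  · exact hs.convexOn.2 hu hv hp.le (by linarith) (by ring)
  · intro h
    exact hs.2 hu hv h hp (by linarith) (by ring)

lemma key {q d : ℕ} (hd : 2 ≤ d) (u v : Fin q → ℝ) (hu : ∀ c, 0 ≤ u c) (hv : ∀ c, 0 ≤ v c)
    (hne : ∃ c, u c ≠ v c) (M : ℝ) (hM : ∑ c, u c ^ d = M) (hM' : ∑ c, v c ^ d = M)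
    (p : Fin d → ℝ) (hp : ∀ i, 0 < p i) (hp1 : ∀ i, p i < 1) :
    ∑ c, ∏ i, (p i * u c + (1 - p i) * v c) < M := by
  have hdr : (0:ℝ) < d := by positivity
  have h1 : ∑ c, ∏ i, (p i * u c + (1 - p i) * v c) ≤
      ∑ c, ∑ i, (1 / (d:ℝ)) * (p i * u c + (1 - p i) * v c) ^ d := by
    refine Finset.sum_le_sum fun c _ => amgm hd _ fun i => ?_
    have := hp1 i
    have := mul_nonneg (hp i).le (hu c)
    have := mul_nonneg (sub_nonneg.2 (hp1 i).le) (hv c)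
    linarith
  have hne' : (Finset.univ : Finset (Fin d)).Nonempty := ⟨⟨0, by omega⟩, Finset.mem_univ _⟩
  have h2 : ∑ c, ∑ i, (1 / (d:ℝ)) * (p i * u c + (1 - p i) * v c) ^ d <
      ∑ c, ∑ i, (1 / (d:ℝ)) * (p i * u c ^ d + (1 - p i) * v c ^ d) := by
    apply Finset.sum_lt_sum
    · intro c _
      refine Finset.sum_le_sum fun i _ => ?_
      exact mul_le_mul_of_nonneg_left (pow_mix hd _ _ _ (hu c) (hv c) (hp i) (hp1 i)).1 (by positivity)
    · obtain ⟨c, hc⟩ := hne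
      refine ⟨c, Finset.mem_univ _, Finset.sum_lt_sum_of_nonempty hne' fun i _ => ?_⟩
      exact mul_lt_mul_of_pos_left
        ((pow_mix hd _ _ _ (hu c) (hv c) (hp i) (hp1 i)).2 hc) (by positivity)
  have h3 : ∑ c, ∑ i, (1 / (d:ℝ)) * (p i * u c ^ d + (1 - p i) * v c ^ d) = M := by
    rw [Finset.sum_comm]
    have : ∀ i, ∑ c, (1 / (d:ℝ)) * (p i * u c ^ d + (1 - p i) * v c ^ d) = (1 / (d:ℝ)) * M := by
      intro i
      rw [← Finset.mul_sum, Finset.sum_add_distrib, ← Finset.mul_sum, ← Finset.mul_sum, hM, hM']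
      ring
    simp_rw [this]
    simp
    field_simp
  linarith

lemma Bmat_0s {q : ℕ} (β : ℝ) (A : Matrix (Fin q) (Fin q) ℝ) (a : Fin q) :
    Bmat β A 0 a.succ = 1 := by simp [Bmat]

lemma Bmat_ss {q : ℕ} (β : ℝ) (A : Matrix (Fin q) (Fin q) ℝ) (c a : Fin q) :
    Bmat β A c.succ a.succ = A c a := by simp [Bmat]

lemma Bmat_nonneg {q : ℕ} (β : ℝ) (hβ : 1 ≤ β) (A : Matrix (Fin q) (Fin q) ℝ)
    (hge : ∀ c b, (1:ℝ) ≤ A c b) (i j : Fin (q+1)) : 0 ≤ Bmat β A i j := by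
  unfold Bmat
  simp only [Matrix.of_apply]
  split_ifs
  · linarith
  · norm_num
  · norm_num
  · linarith [hge (i.pred ‹_›) (j.pred ‹_›)]

lemma Ffun_mem {k d : ℕ} (B : Matrix (Fin k) (Fin k) ℝ) (hB : ∀ i j, 0 ≤ B i j)
    (μ : (Fin d → Fin k) → ℝ) (hμ : ∀ σ, 0 ≤ μ σ) (c : Fin k) : Ffun B μ c ∈ Set.Icc (0:ℝ) 1 := by
  have hG : ∀ c, 0 ≤ Gfun B μ c := fun c =>
    Finset.sum_nonneg fun σ _ => mul_nonneg (hμ σ) (Finset.prod_nonneg fun i _ => hB _ _)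
  have hS : 0 ≤ ∑ b, Gfun B μ b := Finset.sum_nonneg fun b _ => hG b
  refine ⟨div_nonneg (hG c) hS, div_le_one_of_le₀ ?_ hS⟩
  exact Finset.single_le_sum (fun b _ => hG b) (Finset.mem_univ c)

lemma prodmarg_nonneg {k d : ℕ} (μ : (Fin d → Fin k) → ℝ) (hμ : ∀ σ, 0 ≤ μ σ)
    (lam : Fin d → Fin d → Fin k → ℝ) (hl : ∀ i j c, 0 ≤ lam i j c) (σ : Fin d → Fin k) :
    0 ≤ prodMeasure (fun i => marg (tilt (lam i) μ) i) σ := by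
  refine Finset.prod_nonneg fun i _ => Finset.sum_nonneg fun τ _ => ?_
  have h : ∀ τ, 0 ≤ μ τ * ∏ j, lam i j (τ j) := fun τ =>
    mul_nonneg (hμ τ) (Finset.prod_nonneg fun j _ => hl _ _ _)
  split_ifs
  · exact div_nonneg (h _) (Finset.sum_nonneg fun τ _ => h τ)
  · exact le_rfl

lemma meas_F {k d : ℕ} (B : Matrix (Fin k) (Fin k) ℝ) (μ : (Fin d → Fin k) → ℝ) (c : Fin k) :
    Measurable (fun lam : Fin d → Fin d → Fin k → ℝ =>
      Ffun B (prodMeasure (fun i => marg (tilt (lam i) μ) i)) c) := by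
  have h1 : ∀ i b, Measurable (fun lam : Fin d → Fin d → Fin k → ℝ =>
      marg (tilt (lam i) μ) i b) := by
    intro i b
    unfold marg
    refine Finset.measurable_sum _ fun σ _ => ?_
    split_ifs
    · unfold tilt
      fun_prop
    · fun_prop
  have h2 : ∀ c, Measurable (fun lam : Fin d → Fin d → Fin k → ℝ =>
      Gfun B (prodMeasure (fun i => marg (tilt (lam i) μ) i)) c) := by
    intro c
    simp_rw [Gfun_prod]
    refine Finset.measurable_prod _ fun i _ => Finset.measurable_sum _ fun b _ => ?_
    exact (h1 i b).mul_const _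
  unfold Ffun
  exact (h2 c).div (Finset.measurable_sum _ fun b _ => h2 b)

lemma integrable_mono {Ω : Type*} [MeasurableSpace Ω] (ξ : Measure Ω) [IsProbabilityMeasure ξ]
    (φ : ℝ → ℝ) (hφ : StrictMonoOn φ (Set.Icc 0 1)) (f : Ω → ℝ) (hf : Measurable f)
    (hm : ∀ᵐ x ∂ξ, f x ∈ Set.Icc (0:ℝ) 1) : Integrable (fun x => φ (f x)) ξ := by
  have h01 : (0:ℝ) ≤ 1 := zero_le_one
  have hmono : Monotone (fun x : ℝ => φ (Set.projIcc (0:ℝ) 1 h01 x)) := by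
    intro x y hxy
    exact hφ.monotoneOn (Subtype.prop _) (Subtype.prop _) (Set.monotone_projIcc h01 hxy)
  have hint : Integrable (fun x => φ (Set.projIcc (0:ℝ) 1 h01 (f x))) ξ := by
    refine Integrable.of_mem_Icc (φ 0) (φ 1) (hmono.measurable.comp hf).aemeasurable ?_
    refine Filter.Eventually.of_forall fun x => ?_
    have hp := (Set.projIcc (0:ℝ) 1 h01 (f x)).2
    exact ⟨hφ.monotoneOn (by simp) hp hp.1, hφ.monotoneOn hp (by simp) hp.2⟩
  refine hint.congr ?_
  filter_upwards [hm] with x hx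
  rw [Set.projIcc_of_mem h01 hx]

/-- If integral equals a one-sided bound, a.e. equality. -/
lemma ae_eq_of_bound {Ω : Type*} [MeasurableSpace Ω] (ξ : Measure Ω) [IsProbabilityMeasure ξ]
    (f : Ω → ℝ) (hf : Integrable f ξ) (K : ℝ) (h : ∀ᵐ x ∂ξ, K ≤ f x) (hK : K = ∫ x, f x ∂ξ) :
    ∀ᵐ x ∂ξ, f x = K := by
  have h0 : ∫ x, (f x - K) ∂ξ = 0 := by
    rw [integral_sub hf (integrable_const _)]
    simp [← hK]
  have := (integral_eq_zero_iff_of_nonneg_ae (μ := ξ) (f := fun x => f x - K)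
    (by filter_upwards [h] with x hx; simpa using hx) (hf.sub (integrable_const _))).1 h0
  filter_upwards [this] with x hx
  simpa [sub_eq_zero] using hx

lemma no_pos {q d : ℕ} (hd : 2 ≤ d) (β : ℝ) (hβ : 1 ≤ β)
    (A : Matrix (Fin q) (Fin q) ℝ)
    (hge : ∀ c b, (1:ℝ) ≤ A c b)
    (a₁ a₂ : Fin q) (M : ℝ) (hM₁ : ∑ c, A c a₁ ^ d = M) (hM₂ : ∑ c, A c a₂ ^ d = M)
    (hne : ∃ c, A c a₁ ≠ A c a₂)
    (φ : ℝ → ℝ) (hφ : StrictMonoOn φ (Set.Icc 0 1))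
    (ξ : Measure (Fin d → Fin d → Fin (q+1) → ℝ)) [IsProbabilityMeasure ξ]
    (hpos : ∀ᵐ lam ∂ξ, ∀ i j c, 0 ≤ lam i j c)
    (H : ∀ μ : (Fin d → Fin (q+1)) → ℝ, IsProbDist μ →
          ∀ c, φ (Ffun (Bmat β A) μ c) =
            ∫ lam, φ (Ffun (Bmat β A)
              (prodMeasure (fun i => marg (tilt (lam i) μ) i)) c) ∂ξ) : False := by
  have hM0 : 0 ≤ M := by
    rw [← hM₁]; exact Finset.sum_nonneg fun c _ => pow_nonneg (by linarith [hge c a₁]) _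
  have hmem : (1 + M)⁻¹ ∈ Set.Icc (0:ℝ) 1 :=
    ⟨by positivity, inv_le_one_of_one_le₀ (by linarith)⟩
  have hB := Bmat_nonneg β hβ A hge
  have hFmem : ∀ μ : (Fin d → Fin (q+1)) → ℝ, IsProbDist μ → ∀ᵐ lam ∂ξ, Ffun (Bmat β A)
              (prodMeasure (fun i => marg (tilt (lam i) μ) i)) 0 ∈ Set.Icc (0:ℝ) 1 := by
    intro μ hμ
    filter_upwards [hpos] with lam hl
    exact Ffun_mem _ hB _ (prodmarg_nonneg μ hμ.1 lam hl) 0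
  have hint : ∀ μ : (Fin d → Fin (q+1)) → ℝ, IsProbDist μ → Integrable (fun lam => φ (Ffun (Bmat β A)
              (prodMeasure (fun i => marg (tilt (lam i) μ) i)) 0)) ξ := fun μ hμ =>
    integrable_mono ξ φ hφ _ (meas_F _ μ 0) (hFmem μ hμ)
  have hval : ∀ t : ℝ, Ffun (Bmat β A) (mixd (d := d) a₁.succ a₂.succ t) 0 = (1 + M)⁻¹ := by
    intro t
    unfold Ffun
    simp_rw [Gfun_mixd]
    rw [Fin.sum_univ_succ]
    simp only [Bmat_0s, Bmat_ss, Finset.sum_add_distrib, ← Finset.mul_sum, hM₁, hM₂]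
    rw [← one_div]
    congr 1 <;> simp
    ring
  -- formula for the unnormalised functional
  have hG : ∀ (t : ℝ) (lam : Fin d → Fin d → Fin (q+1) → ℝ) (c : Fin (q+1)), Gfun (Bmat β A)
      (prodMeasure (fun i => marg (tilt (lam i) (mixd (d := d) a₁.succ a₂.succ t)) i)) c =
      ∏ i, ((t * (∏ j, lam i j a₁.succ) * Bmat β A c a₁.succ +
        (1 - t) * (∏ j, lam i j a₂.succ) * Bmat β A c a₂.succ) /
        (t * (∏ j, lam i j a₁.succ) + (1 - t) * (∏ j, lam i j a₂.succ))) := by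
    intro t lam c
    rw [Gfun_prod]
    exact Finset.prod_congr rfl fun i _ => marg_tilt_mixd _ _ _ _ _ _
  -- nondegeneracy
  have hnd : ∀ (a : Fin q) (t : ℝ), 0 ≤ t → t ≤ 1 → (∀ lam : Fin d → Fin d → Fin (q+1) → ℝ, ∀ i,
      t * (∏ j, lam i j a₁.succ) + (1 - t) * (∏ j, lam i j a₂.succ) = ∏ j, lam i j a.succ) →
      (∀ lam : Fin d → Fin d → Fin (q+1) → ℝ, ∀ i c,
      t * (∏ j, lam i j a₁.succ) * Bmat β A c a₁.succ +
        (1 - t) * (∏ j, lam i j a₂.succ) * Bmat β A c a₂.succ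
         = (∏ j, lam i j a.succ) * Bmat β A c a.succ) → ∑ c, A c a ^ d = M →
      ∀ᵐ lam ∂ξ, ∀ i, ∏ j, lam i j a.succ ≠ 0 := by
    intro a t ht0 ht1 h1 h2 hMa
    have hpd := mixd_prob (d := d) a₁.succ a₂.succ t ht0 ht1
    have hcase : ∀ lam : Fin d → Fin d → Fin (q+1) → ℝ, (∃ i, ∏ j, lam i j a.succ = 0) →
      Ffun (Bmat β A) (prodMeasure (fun i => marg (tilt (lam i)
        (mixd (d := d) a₁.succ a₂.succ t)) i)) 0 = 0 := by
      rintro lam ⟨i, hi⟩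
      unfold Ffun
      rw [hG, Finset.prod_eq_zero (Finset.mem_univ i), zero_div]
      rw [h1, hi, div_zero]
    have hcase2 : ∀ lam : Fin d → Fin d → Fin (q+1) → ℝ, (∀ i, ∏ j, lam i j a.succ ≠ 0) →
      Ffun (Bmat β A) (prodMeasure (fun i => marg (tilt (lam i)
        (mixd (d := d) a₁.succ a₂.succ t)) i)) 0 = (1 + M)⁻¹ := by
      intro lam hl
      unfold Ffun
      simp_rw [hG, h1, h2]
      have : ∀ c i, (∏ j, lam i j a.succ) * Bmat β A c a.succ / (∏ j, lam i j a.succ)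
        = Bmat β A c a.succ := fun c i => mul_div_cancel_left₀ _ (hl i)
      simp_rw [this]
      rw [Fin.sum_univ_succ]
      simp [Bmat_0s, Bmat_ss, hMa]
    have hle : ∀ᵐ lam ∂ξ, -φ ((1 + M)⁻¹) ≤ -φ (Ffun (Bmat β A) (prodMeasure (fun i =>
        marg (tilt (lam i) (mixd (d := d) a₁.succ a₂.succ t)) i)) 0) := by
      refine Filter.Eventually.of_forall fun lam => neg_le_neg ?_
      by_cases h : ∃ i, ∏ j, lam i j a.succ = 0
      · rw [hcase lam h]
        exact hφ.monotoneOn (by simp) hmem hmem.1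
      · push Not at h
        rw [hcase2 lam h]
    have hae := ae_eq_of_bound ξ _ (hint _ hpd).neg _ hle (by
      simp only [Pi.neg_apply]
      rw [integral_neg, ← H _ hpd 0, hval])
    filter_upwards [hae] with lam hl
    by_contra! hc
    rw [Pi.neg_apply, neg_inj, hcase lam hc] at hl
    have : φ 0 < φ ((1+M)⁻¹) := hφ (by simp) hmem (by positivity)
    linarith
  have hn1 := hnd a₁ 1 (by norm_num) (by norm_num) (by intros; ring) (by intros; ring) hM₁
  have hn2 := hnd a₂ 0 (by norm_num) (by norm_num) (by intros; ring) (by intros; ring) hM₂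
  have hpd := mixd_prob (d := d) a₁.succ a₂.succ (1/2) (by norm_num) (by norm_num)
  have hlt : ∀ᵐ lam ∂ξ, φ ((1 + M)⁻¹) < φ (Ffun (Bmat β A) (prodMeasure (fun i =>
        marg (tilt (lam i) (mixd (d := d) a₁.succ a₂.succ (1/2))) i)) 0) := by
    filter_upwards [hpos, hn1, hn2, hFmem _ hpd] with lam hl h1 h2 hF
    refine hφ hmem hF ?_
    have p1 : ∀ i, 0 < ∏ j, lam i j a₁.succ := fun i =>
      lt_of_le_of_ne (Finset.prod_nonneg fun j _ => hl _ _ _) (h1 i).symm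
    have p2 : ∀ i, 0 < ∏ j, lam i j a₂.succ := fun i =>
      lt_of_le_of_ne (Finset.prod_nonneg fun j _ => hl _ _ _) (h2 i).symm
    set p : Fin d → ℝ := fun i => (∏ j, lam i j a₁.succ) /
      ((∏ j, lam i j a₁.succ) + ∏ j, lam i j a₂.succ) with hp
    have hG' : ∀ c, Gfun (Bmat β A) (prodMeasure (fun i =>
        marg (tilt (lam i) (mixd (d := d) a₁.succ a₂.succ (1/2))) i)) c =
        ∏ i, (p i * Bmat β A c a₁.succ + (1 - p i) * Bmat β A c a₂.succ) := by
      intro c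
      rw [hG]
      refine Finset.prod_congr rfl fun i _ => ?_
      have := p1 i
      have := p2 i
      simp only [hp]
      generalize (∏ j, lam i j a₁.succ) = x at *
      generalize (∏ j, lam i j a₂.succ) = y at *
      have hxy : x + y ≠ 0 := by positivity
      have hxy2 : 1/2 * x + (1 - 1/2) * y ≠ 0 := by
        have : 0 < 1/2 * x + (1 - 1/2) * y := by linarith
        exact this.ne'
      rw [div_eq_iff hxy2]
      field_simp
      ring
    have hk := key hd (fun c => A c a₁) (fun c => A c a₂) (fun c => by linarith [hge c a₁])
      (fun c => by linarith [hge c a₂]) hne M hM₁ hM₂ p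
      (fun i => div_pos (p1 i) (add_pos (p1 i) (p2 i)))
      (fun i => (div_lt_one (add_pos (p1 i) (p2 i))).2 (by linarith [p2 i]))
    have hk0 : 0 ≤ ∑ c, ∏ i, (p i * A c a₁ + (1 - p i) * A c a₂) := by
      refine Finset.sum_nonneg fun c _ => Finset.prod_nonneg fun i _ => ?_
      have e1 : 0 < p i := div_pos (p1 i) (add_pos (p1 i) (p2 i))
      have e2 : p i < 1 := (div_lt_one (add_pos (p1 i) (p2 i))).2 (by linarith [p2 i])
      have := mul_nonneg e1.le (zero_le_one.trans (hge c a₁))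
      have := mul_nonneg (sub_nonneg.2 e2.le) (zero_le_one.trans (hge c a₂))
      linarith
    unfold Ffun
    simp_rw [hG']
    rw [Fin.sum_univ_succ]
    simp only [Bmat_0s, Bmat_ss]
    have e : ∏ i, (p i * 1 + (1 - p i) * 1) = 1 := Finset.prod_eq_one fun i _ => by ring
    rw [e, one_div]
    exact inv_strictAnti₀ (by linarith) (by linarith)
  have hae := ae_eq_of_bound ξ _ (hint _ hpd) _ (hlt.mono fun _ h => h.le) (by
      rw [← H _ hpd 0, hval])
  obtain ⟨lam, h1, h2⟩ := (hlt.and hae).exists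
  exact absurd h2 h1.ne'

/-- Theorem: no universal Weitz-style reduction for `B(β,A)`.
For `q ≥ 3`, `d ≥ 2`, `β ≥ 1` and a symmetric interaction matrix `A` with
`A ≥ 1 1ᵀ` entrywise (strictly somewhere), `|𝓜(d,A)| ≥ 2` and `A c a₁ ≠ A c a₂`
for some `c` and `a₁, a₂ ∈ 𝓜(d,A)`: for every strictly monotone potential
`φ : [0,1] → ℝ` there is no universal probability distribution `ξ` on `d`-tuples
of nonnegative external fields such that
`φ(F_B(μ)) = E_{λ∼ξ}[φ(F_B(⊗ᵢ (λ⁽ⁱ⁾ ⋆ μ)ᵢ))]` for every distribution `μ` on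
`([q] ∪ {c*})^d`. -/
theorem stmt0 (q d : ℕ) (hq : 3 ≤ q) (hd : 2 ≤ d) (β : ℝ) (hβ : 1 ≤ β)
    (A : Matrix (Fin q) (Fin q) ℝ) (hsymm : A.IsSymm)
    (hge : ∀ c b, (1:ℝ) ≤ A c b) (hstrict : ∃ c b, (1:ℝ) < A c b)
    (hMcard : 2 ≤ (Mset d A).ncard)
    (hMne : ∃ c, ∃ a₁ ∈ Mset d A, ∃ a₂ ∈ Mset d A, A c a₁ ≠ A c a₂)
    (φ : ℝ → ℝ)
    (hφ : StrictMonoOn φ (Set.Icc 0 1) ∨ StrictAntiOn φ (Set.Icc 0 1)) :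
    ¬ ∃ ξ : Measure (Fin d → Fin d → Fin (q+1) → ℝ),
        IsProbabilityMeasure ξ ∧
        (∀ᵐ lam ∂ξ, ∀ i j c, 0 ≤ lam i j c) ∧
        ∀ μ : (Fin d → Fin (q+1)) → ℝ, IsProbDist μ →
          ∀ c, φ (Ffun (Bmat β A) μ c) =
            ∫ lam, φ (Ffun (Bmat β A)
              (prodMeasure (fun i => marg (tilt (lam i) μ) i)) c) ∂ξ := by
  rintro ⟨ξ, hξ, hpos, H⟩
  obtain ⟨c, a₁, h₁, a₂, h₂, hc⟩ := hMne
  have hMeq : ∑ c, A c a₂ ^ d = ∑ c, A c a₁ ^ d := le_antisymm (h₁ a₂) (h₂ a₁)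
  rcases hφ with hφ | hφ
  · exact no_pos hd β hβ A hge a₁ a₂ _ rfl hMeq ⟨c, hc⟩ φ hφ ξ hpos H
  · refine no_pos hd β hβ A hge a₁ a₂ _ rfl hMeq ⟨c, hc⟩ (fun x => - φ x)
      (fun x hx y hy hxy => neg_lt_neg (hφ hx hy hxy)) ξ hpos ?_
    intro μ hμ c
    simp only [integral_neg]
    rw [H μ hμ c]
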